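/- Let c(u) = 1 + Σ_{r≥1} c_r u^{-r} be a formal power series with coefficients in a commutative ring R containing ℚ. Then there exists a unique formal power series z(u) = 1 + Σ_{r≥1} z_r u^{-r} with coefficients in R such that z(u)·z(u+1/2) = c(u-1), where z(u+1/2) denotes the formal series obtained by substituting u+1/2 for u and re-expanding in powers of u^{-1}. -/

import Mathlib

/-!
For `n ≥ 1` the unknown `z_n` enters the coefficient of `u^{-n}` in `z(u) z(u+1/2)` only through
`z_n · z_0 + z_0 · z_n = 2 z_n`, because the shift `u ↦ u + 1/2` is unitriangular on coefficients;
everything else involves only `z_0, …, z_{n-1}` (`convo_shiftC_eq`). As `2` is invertible in `R`,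
the equation is therefore equivalent to a course-of-values recursion for `z_n`, and such a
recursion has exactly one solution (`existsUnique_rec`).
-/

open Finset

/-- Coefficient of `u^{-n}` in `g(u + q)`, where `g(u) = Σ_{r≥0} g_r u^{-r}`:
`(u+q)^{-r} = Σ_{k≥0} (-1)^k (r+k-1 choose k) q^k u^{-r-k}`. -/
noncomputable def shiftC {R : Type*} [Ring R] [Algebra ℚ R] (q : ℚ) (g : ℕ → R) (n : ℕ) : R :=
  ∑ r ∈ range (n + 1),
    (((-1 : ℚ) ^ (n - r)) * ((n - 1).choose (n - r) : ℚ) * q ^ (n - r)) • g r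

/-- Coefficient of `u^{-n}` in the product of two series. -/
noncomputable def convo {R : Type*} [Ring R] (a b : ℕ → R) (n : ℕ) : R :=
  ∑ i ∈ range (n + 1), a i * b (n - i)

/-- The series `g` with all coefficients of index `≥ n` replaced by `0`. -/
def trunc {R : Type*} [Zero R] (n : ℕ) (g : ℕ → R) (m : ℕ) : R :=
  if m < n then g m else 0

/-- The sequence solving the recursion `z n = F n (trunc n z)`. -/
def solveRec {R : Type*} [Zero R] (F : ℕ → (ℕ → R) → R) (n : ℕ) : R :=
  F n (fun m => if _h : m < n then solveRec F m else 0)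
termination_by n

lemma existsUnique_rec {R : Type*} [Zero R] (F : ℕ → (ℕ → R) → R) :
    ∃! z : ℕ → R, ∀ n, z n = F n (trunc n z) := by
  refine ⟨solveRec F, fun n => ?_, fun y hy => ?_⟩
  · rw [solveRec]
    congr 1
  · have hz : ∀ n, solveRec F n = F n (trunc n (solveRec F)) := fun n => by
      rw [solveRec]
      congr 1
    funext n
    induction n using Nat.strong_induction_on with
    | _ n ih =>
      rw [hy n, hz n]
      congr 1
      funext m
      unfold trunc
      split_ifs with h
      · exact ih m h
      · rfl

section

variable {R : Type*} [CommRing R] [Algebra ℚ R]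

lemma shiftC_zero (q : ℚ) (g : ℕ → R) : shiftC q g 0 = g 0 := by
  simp [shiftC]

lemma shiftC_trunc_of_lt (q : ℚ) (g : ℕ → R) {m n : ℕ} (h : m < n) :
    shiftC q (trunc n g) m = shiftC q g m := by
  refine Finset.sum_congr rfl fun r hr => ?_
  have hr' : r < n := by
    have := Finset.mem_range.1 hr
    omega
  simp [trunc, hr']

/-- The shift is unitriangular: the top coefficient enters with factor `1`. -/
lemma shiftC_eq (q : ℚ) (g : ℕ → R) (n : ℕ) :
    shiftC q g n = g n + shiftC q (trunc n g) n := by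
  unfold shiftC
  rw [Finset.sum_range_succ, Finset.sum_range_succ, add_comm]
  congr 1
  · simp
  · have hn : trunc n g n = 0 := by simp [trunc]
    rw [hn, smul_zero, add_zero]
    refine Finset.sum_congr rfl fun r hr => ?_
    simp [trunc, Finset.mem_range.1 hr]

/-- The `n`-th coefficient of `z(u) z(u+q)` is `2 z_n` plus a term in the lower coefficients. -/
lemma convo_shiftC_eq (q : ℚ) (z : ℕ → R) (hz : z 0 = 1) {n : ℕ} (hn : n ≠ 0) :
    convo z (shiftC q z) n
      = 2 * z n + convo (trunc n z) (shiftC q (trunc n z)) n := by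
  obtain ⟨m, rfl⟩ := Nat.exists_eq_succ_of_ne_zero hn
  have h0 : trunc (m + 1) z 0 = 1 := by simp [trunc, hz]
  have h1 : trunc (m + 1) z (m + 1) = 0 := by simp [trunc]
  have hmid : ∑ i ∈ range m, trunc (m + 1) z (i + 1) *
        shiftC q (trunc (m + 1) z) (m + 1 - (i + 1))
      = ∑ i ∈ range m, z (i + 1) * shiftC q z (m + 1 - (i + 1)) := by
    refine Finset.sum_congr rfl fun i hi => ?_
    have hi' := Finset.mem_range.1 hi
    rw [shiftC_trunc_of_lt q z (by omega)]
    simp [trunc, hi']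
  unfold convo
  simp only [Nat.succ_eq_add_one]
  rw [Finset.sum_range_succ, Finset.sum_range_succ', Finset.sum_range_succ,
    Finset.sum_range_succ', hmid, h0, h1, hz, Nat.sub_self, Nat.sub_zero, shiftC_zero q z, hz,
    shiftC_eq q z (m + 1)]
  ring

lemma two_mul_half_smul (x : R) : 2 * ((1 / 2 : ℚ) • x) = x := by
  rw [two_mul, ← add_smul]
  norm_num

lemma half_smul_two_mul (x : R) : (1 / 2 : ℚ) • (2 * x) = x := by
  rw [← mul_smul_comm, two_mul_half_smul]

end

/-- For `c(u) = 1 + Σ_{r≥1} c_r u^{-r}` over a commutative ℚ-algebra `R`,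
there is a unique series `z(u) = 1 + Σ_{r≥1} z_r u^{-r}` with
`z(u)·z(u+1/2) = c(u-1)` (coefficientwise). -/
theorem stmt1 {R : Type*} [CommRing R] [Algebra ℚ R] (c : ℕ → R) (hc : c 0 = 1) :
    ∃! z : ℕ → R, z 0 = 1 ∧
      ∀ n, convo z (shiftC (1 / 2) z) n = shiftC (-1) c n := by
  -- Solving the `n`-th equation for `z n` turns the problem into a recursion.
  let F : ℕ → (ℕ → R) → R := fun n t => if n = 0 then 1 else
    (1 / 2 : ℚ) • (shiftC (-1) c n - convo t (shiftC (1 / 2) t) n)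
  have key : ∀ z : ℕ → R,
      (z 0 = 1 ∧ ∀ n, convo z (shiftC (1 / 2) z) n = shiftC (-1) c n) ↔
      ∀ n, z n = F n (trunc n z) := by
    intro z
    constructor
    · rintro ⟨h0, h⟩ n
      by_cases hn : n = 0
      · simp [F, hn, h0]
      · simp only [F, hn, if_false]
        rw [← h n, convo_shiftC_eq _ z h0 hn, add_sub_cancel_right, half_smul_two_mul]
    · intro h
      have h0 : z 0 = 1 := by simpa [F] using h 0
      refine ⟨h0, fun n => ?_⟩
      by_cases hn : n = 0
      · subst hn
        simp [convo, shiftC_zero, h0, hc]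
      · have hh := h n
        simp only [F, hn, if_false] at hh
        rw [convo_shiftC_eq _ z h0 hn, hh, two_mul_half_smul, sub_add_cancel]
  exact (existsUnique_congr key).2 (existsUnique_rec F)
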